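/- Consider the D-dimensional scalar λ-bracket of hydrodynamic type {u_λ u} = Σ_{α=1}^D (a_α λ_α + b_α ∂_α u) on the algebra of differential polynomials in one generator u with D commuting derivations ∂_1,…,∂_D, where a_α, b_α depend only on u. This λ-bracket is skew-symmetric if and only if 2b_α = ∂a_α/∂u for all α = 1,…,D (Mokhov's skew-symmetry condition); moreover, assuming skew-symmetry, it defines a D-dimensional Poisson vertex algebra structure if additionally a_α = c_α g for some constants c_α and a single function g = g(u), in which case {u_λ u} = Σ_α c_α (2g λ_α + (∂g/∂u) ∂_α u) up to overall normalization and the Jacobi identity holds. -/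

import Mathlib

open MvPolynomial

/-- The algebra of differential polynomials in one generator `u` with `D`
commuting derivations: variables `u^{(M)}` indexed by multi-indices
`M : Fin D →₀ ℕ`; the generator is `u = u^{(0)}`. -/
abbrev DiffPolyD (D : ℕ) := MvPolynomial (Fin D →₀ ℕ) ℂ

/-- `λ`-polynomials in `λ_1, …, λ_D` with coefficients in `DiffPolyD D`. -/
abbrev LPolyD (D : ℕ) := MvPolynomial (Fin D) (DiffPolyD D)

/-- The `α`-th total derivative `∂_α`, with `∂_α u^{(M)} = u^{(M + e_α)}`. -/
noncomputable def derD (D : ℕ) (α : Fin D) :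
    Derivation ℂ (DiffPolyD D) (DiffPolyD D) :=
  MvPolynomial.mkDerivation ℂ (fun M => MvPolynomial.X (M + Finsupp.single α 1))

/-- `∂_α` applied coefficientwise to a `λ`-polynomial. -/
noncomputable def dmapD (D : ℕ) (α : Fin D) (p : LPolyD D) : LPolyD D :=
  p.support.sum fun N =>
    MvPolynomial.monomial N (derD D α (MvPolynomial.coeff N p))

/-- The operator `λ_α + ∂_α`. -/
noncomputable def opSD (D : ℕ) (α : Fin D) (p : LPolyD D) : LPolyD D :=
  MvPolynomial.X α * p + dmapD D α p

/-- The operator `-λ_α - ∂_α`. -/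
noncomputable def opTD (D : ℕ) (α : Fin D) (p : LPolyD D) : LPolyD D :=
  -(MvPolynomial.X α * p) - dmapD D α p

/-- The composite operator `(λ + ∂)^N = Π_α (λ_α + ∂_α)^{N_α}`. -/
noncomputable def opSN (D : ℕ) (N : Fin D →₀ ℕ) (p : LPolyD D) : LPolyD D :=
  (List.finRange D).foldl (fun q α => (opSD D α)^[N α] q) p

/-- The composite operator `(-λ - ∂)^N = Π_α (-λ_α - ∂_α)^{N_α}`. -/
noncomputable def opTN (D : ℕ) (N : Fin D →₀ ℕ) (p : LPolyD D) : LPolyD D :=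
  (List.finRange D).foldl (fun q α => (opTD D α)^[N α] q) p

/-- `H(λ+∂)` applied to `r`: expand `H = Σ_P c_P λ^P` and apply
`Σ_P c_P (λ+∂)^P` to `r`. -/
noncomputable def hOp (D : ℕ) (H : LPolyD D) (r : LPolyD D) : LPolyD D :=
  H.support.sum fun P =>
    MvPolynomial.C (MvPolynomial.coeff P H) * opSN D P r

/-- `{u_{-λ-∂} u}` obtained from `{u_λ u} = Σ_N c_N λ^N` as `Σ_N (-λ-∂)^N c_N`. -/
noncomputable def negSubstD (D : ℕ) (H : LPolyD D) : LPolyD D :=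
  H.support.sum fun N => opTN D N (MvPolynomial.C (MvPolynomial.coeff N H))

/-- The `D`-dimensional Master Formula (scalar case):
`{f_λ g} = Σ_{M,N} (∂g/∂u^{(N)}) (λ+∂)^N H(λ+∂) (-λ-∂)^M (∂f/∂u^{(M)})`. -/
noncomputable def mfD (D : ℕ) (H : LPolyD D) (f g : DiffPolyD D) : LPolyD D :=
  ∑ᶠ (M : Fin D →₀ ℕ), ∑ᶠ (N : Fin D →₀ ℕ),
    MvPolynomial.C (MvPolynomial.pderiv N g) *
      opSN D N (hOp D H (opTN D M (MvPolynomial.C (MvPolynomial.pderiv M f))))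

/-- The Jacobi identity left-hand side on the generator `u`:
`{u_λ{u_μ u}} - {u_μ{u_λ u}} - {{u_λ u}_{λ+μ} u}`, an element of
`V[λ][μ]` (outer variables `μ_α`, inner variables `λ_α`). -/
noncomputable def jacD (D : ℕ) (H : LPolyD D) :
    MvPolynomial (Fin D) (LPolyD D) :=
  (H.support.sum fun M =>
    MvPolynomial.monomial M (mfD D H (MvPolynomial.X 0) (MvPolynomial.coeff M H)))
  - (H.support.sum fun N =>
      (mfD D H (MvPolynomial.X 0) (MvPolynomial.coeff N H)).support.sum fun K =>
        MvPolynomial.monomial K (MvPolynomial.monomial N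
          (MvPolynomial.coeff K
            (mfD D H (MvPolynomial.X 0) (MvPolynomial.coeff N H)))))
  - (H.support.sum fun N =>
      (mfD D H (MvPolynomial.coeff N H) (MvPolynomial.X 0)).support.sum fun K =>
        MvPolynomial.C (MvPolynomial.monomial N
          (MvPolynomial.coeff K
            (mfD D H (MvPolynomial.coeff N H) (MvPolynomial.X 0)))) *
        ∏ α : Fin D,
          (MvPolynomial.C (MvPolynomial.X α : LPolyD D) +
            MvPolynomial.X α) ^ (K α))

/-!
Replacing `λ` by `-λ - ∂` in `Σ_α A_α λ_α + B` gives `-Σ_α A_α λ_α - Σ_α ∂_α A_α + B`, so the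
bracket is skew-symmetric iff `2B = Σ_α ∂_α A_α`; for `A_α = a_α(u)` and `B = Σ_α b_α(u) ∂_α u` the
coefficients of the independent variables `∂_α u` can be compared.

If `a_α = 2 c_α G(u)`, the bracket is `2G λ_c + ∂_c G` with `λ_c = Σ_α c_α λ_α` and
`∂_c = Σ_α c_α ∂_α`: it only involves the single direction `c`. Sesquilinearity along `c` expresses
all the nested brackets through `{u_λ G}` and `{G_λ u}`, and the Jacobi identity becomes that of the
one-dimensional bracket `2G λ + ∂G`, a polynomial identity in `G`, `∂G/∂u`, `∂_c G`,
`∂_c (∂G/∂u)`, `∂_c² G`, `λ_c` and `μ_c`.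
-/

open Finsupp (single degree)

section LowDegreeSums

variable {ι A : Type*} [AddCommMonoid A]

theorem finsum_eq_zero_add_sum_single [Fintype ι] {F : (ι →₀ ℕ) → A}
    (hF : ∀ N, 1 < degree N → F N = 0) :
    ∑ᶠ N, F N = F 0 + ∑ i, F (single i 1) := by
  classical
  let e : ι ↪ (ι →₀ ℕ) := ⟨fun i => single i 1, Finsupp.single_left_injective one_ne_zero⟩
  have zero_notMem : (0 : ι →₀ ℕ) ∉ Finset.univ.map e := by simp [e]
  have support_subset : Function.support F ⊆ ↑(insert 0 (Finset.univ.map e)) := by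
    intro N hN
    have hdeg : degree N ≤ 1 := not_lt.mp fun h => hN (hF N h)
    rcases Nat.le_one_iff_eq_zero_or_eq_one.mp hdeg with h | h
    · simp [(Finsupp.degree_eq_zero_iff N).mp h]
    · have : N ∈ Set.range fun i : ι => single i 1 := Finsupp.range_single_one ▸ h
      simpa [e] using Or.inr this
  rw [finsum_eq_sum_of_support_subset F support_subset, Finset.sum_insert zero_notMem,
    Finset.sum_map]
  rfl

theorem sum_support_of_totalDegree_le_one [Fintype ι] {R : Type*} [CommSemiring R]
    {p : MvPolynomial ι R} (hp : p.totalDegree ≤ 1) {F : (ι →₀ ℕ) → R → A}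
    (hF : ∀ N, F N 0 = 0) :
    ∑ N ∈ p.support, F N (coeff N p) =
      F 0 (coeff 0 p) + ∑ i, F (single i 1) (coeff (single i 1) p) := by
  rw [← finsum_eq_zero_add_sum_single (F := fun N => F N (coeff N p)),
    finsum_eq_sum_of_support_subset]
  · intro N hN
    rw [Finset.mem_coe, mem_support_iff]
    intro h
    exact hN (by simp only [h, hF])
  · intro N hN
    rw [coeff_eq_zero_of_totalDegree_lt (hp.trans_lt hN), hF]

end LowDegreeSums

section CoefficientwiseDerivation

variable {σ k R : Type*} [CommSemiring k] [CommRing R] [Algebra k R]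

/-- The derivation of `R[X_i]` that applies a derivation of `R` to the coefficients and kills the
variables; it extends `∂_α` to `λ`-polynomials. -/
noncomputable def coeffwiseDerivation (δ : Derivation k R R) :
    Derivation k (MvPolynomial σ R) (MvPolynomial σ R) :=
  Derivation.mk'
    { toFun := AddMonoidAlgebra.map (δ : R →+ R)
      map_add' := fun p q => by ext; simp
      map_smul' := fun c p => by ext; simp }
    fun p q => by
      classical
      ext N
      simp only [LinearMap.coe_mk, AddHom.coe_mk, coeff_addMonoidAlgebraMap, smul_eq_mul,
        mul_comm q, coeff_add, coeff_mul, map_sum, AddMonoidHom.coe_coe, δ.leibniz,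
        Finset.sum_add_distrib]
      simp only [mul_comm]

theorem coeff_coeffwiseDerivation (δ : Derivation k R R) (p : MvPolynomial σ R) (N : σ →₀ ℕ) :
    coeff N (coeffwiseDerivation δ p) = δ (coeff N p) :=
  rfl

theorem coeffwiseDerivation_C (δ : Derivation k R R) (r : R) :
    coeffwiseDerivation δ (C r : MvPolynomial σ R) = C (δ r) := by
  classical
  ext N
  simp only [coeff_coeffwiseDerivation, coeff_C, apply_ite δ, map_zero]

theorem coeffwiseDerivation_X (δ : Derivation k R R) (i : σ) :
    coeffwiseDerivation δ (X i : MvPolynomial σ R) = 0 := by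
  classical
  ext N
  simp only [coeff_coeffwiseDerivation, coeff_X, apply_ite δ, map_zero, δ.map_one_eq_zero,
    ite_self, coeff_zero]

end CoefficientwiseDerivation

section CompositeOperators

variable {D : ℕ}

theorem dmapD_eq_coeffwiseDerivation (α : Fin D) (p : LPolyD D) :
    dmapD D α p = coeffwiseDerivation (derD D α) p := by
  classical
  ext N
  simp only [dmapD, coeff_sum, coeff_monomial, Finset.sum_ite_eq', coeff_coeffwiseDerivation]
  split_ifs with h
  · rfl
  · rw [notMem_support_iff.mp h, map_zero]

theorem opSD_C (α : Fin D) (f : DiffPolyD D) :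
    opSD D α (C f) = X α * C f + C (derD D α f) := by
  rw [opSD, dmapD_eq_coeffwiseDerivation, coeffwiseDerivation_C]

theorem opSD_add (α : Fin D) (p q : LPolyD D) :
    opSD D α (p + q) = opSD D α p + opSD D α q := by
  simp only [opSD, dmapD_eq_coeffwiseDerivation, map_add]
  ring

theorem opSD_const_mul (α : Fin D) (z : ℂ) (p : LPolyD D) :
    opSD D α (C (C z) * p) = C (C z) * opSD D α p := by
  rw [opSD, opSD, dmapD_eq_coeffwiseDerivation, dmapD_eq_coeffwiseDerivation, Derivation.leibniz,
    coeffwiseDerivation_C, derivation_C, map_zero, smul_zero, add_zero, smul_eq_mul]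
  ring

theorem opSD_zero (α : Fin D) : opSD D α 0 = 0 := by
  simp only [opSD, dmapD_eq_coeffwiseDerivation, map_zero, mul_zero, add_zero]

theorem opTD_eq_neg_opSD (α : Fin D) (p : LPolyD D) : opTD D α p = -opSD D α p := by
  rw [opTD, opSD, neg_add, sub_eq_add_neg]

theorem foldl_iterate_single {ι A : Type*} [DecidableEq ι] (f : ι → A → A) (i : ι) {l : List ι}
    (hl : l.Nodup) (p : A) :
    l.foldl (fun q j => (f j)^[single i 1 j] q) p = if i ∈ l then f i p else p := by
  induction l generalizing p with
  | nil => simp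
  | cons j l ih =>
    obtain ⟨hj, hl⟩ := List.nodup_cons.mp hl
    rw [List.foldl_cons, ih hl]
    obtain rfl | hij := eq_or_ne i j
    · simp [hj]
    · simp [hij, hij.symm]

theorem opSN_zero (p : LPolyD D) : opSN D 0 p = p :=
  List.foldl_fixed' (fun _ => rfl) _

theorem opTN_zero (p : LPolyD D) : opTN D 0 p = p :=
  List.foldl_fixed' (fun _ => rfl) _

theorem opSN_single (α : Fin D) (p : LPolyD D) : opSN D (single α 1) p = opSD D α p :=
  (foldl_iterate_single (opSD D) α (List.nodup_finRange D) p).trans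
    (if_pos (List.mem_finRange α))

theorem opTN_single (α : Fin D) (p : LPolyD D) : opTN D (single α 1) p = opTD D α p :=
  (foldl_iterate_single (opTD D) α (List.nodup_finRange D) p).trans
    (if_pos (List.mem_finRange α))

theorem opSN_apply_zero (N : Fin D →₀ ℕ) : opSN D N 0 = 0 :=
  List.foldl_fixed' (fun α => Function.iterate_fixed (opSD_zero α) _) _

theorem opTN_apply_zero (N : Fin D →₀ ℕ) : opTN D N 0 = 0 :=
  List.foldl_fixed' (fun α => Function.iterate_fixed
    (by rw [opTD_eq_neg_opSD, opSD_zero, neg_zero]) _) _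

theorem hOp_zero (H : LPolyD D) : hOp D H 0 = 0 := by
  simp only [hOp, opSN_apply_zero, mul_zero, Finset.sum_const_zero]

end CompositeOperators

section AffineBracket

variable {D : ℕ}

/-- The `λ`-polynomial `B + Σ_α A_α λ_α`. A bracket of hydrodynamic type is the case in which the
`A_α` are functions of `u` and `B` is linear in the first derivatives of `u`. -/
noncomputable def affineBracket (A : Fin D → DiffPolyD D) (B : DiffPolyD D) : LPolyD D :=
  C B + ∑ α, C (A α) * X α

variable (A : Fin D → DiffPolyD D) (B : DiffPolyD D)

theorem totalDegree_affineBracket_le : (affineBracket A B).totalDegree ≤ 1 := by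
  refine (totalDegree_add _ _).trans (max_le (by simp) ?_)
  refine totalDegree_finsetSum_le fun α _ => (totalDegree_mul _ _).trans ?_
  simp

theorem coeff_zero_affineBracket : coeff 0 (affineBracket A B) = B := by
  simp [affineBracket, coeff_sum]

theorem coeff_single_affineBracket (α : Fin D) :
    coeff (single α 1) (affineBracket A B) = A α := by
  have hα : (0 : Fin D →₀ ℕ) ≠ single α 1 := by simp [eq_comm]
  simp [affineBracket, coeff_sum, coeff_C, coeff_C_mul, coeff_X, Finsupp.single_left_inj, hα]

theorem sum_support_affineBracket {M : Type*} [AddCommMonoid M]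
    {F : (Fin D →₀ ℕ) → DiffPolyD D → M} (hF : ∀ N, F N 0 = 0) :
    ∑ N ∈ (affineBracket A B).support, F N (coeff N (affineBracket A B)) =
      F 0 B + ∑ α, F (single α 1) (A α) := by
  simp only [sum_support_of_totalDegree_le_one (totalDegree_affineBracket_le A B) hF,
    coeff_zero_affineBracket, coeff_single_affineBracket]

theorem hOp_affineBracket (r : LPolyD D) :
    hOp D (affineBracket A B) r = C B * r + ∑ α, C (A α) * opSD D α r := by
  rw [hOp, sum_support_affineBracket A B (F := fun N c => C c * opSN D N r) (by simp)]
  simp only [opSN_zero, opSN_single]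

theorem hOp_affineBracket_add (r s : LPolyD D) :
    hOp D (affineBracket A B) (r + s) =
      hOp D (affineBracket A B) r + hOp D (affineBracket A B) s := by
  simp only [hOp_affineBracket, opSD_add, mul_add, Finset.sum_add_distrib]
  ring

theorem hOp_affineBracket_const_mul (z : ℂ) (r : LPolyD D) :
    hOp D (affineBracket A B) (C (C z) * r) = C (C z) * hOp D (affineBracket A B) r := by
  simp only [hOp_affineBracket, opSD_const_mul, mul_add, Finset.mul_sum, mul_left_comm (C (C z))]

theorem hOp_affineBracket_one : hOp D (affineBracket A B) 1 = affineBracket A B := by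
  rw [hOp_affineBracket, affineBracket]
  simp [opSD, dmapD_eq_coeffwiseDerivation]

theorem affineBracket_add_negSubstD :
    affineBracket A B + negSubstD D (affineBracket A B) = C (2 * B - ∑ α, derD D α (A α)) := by
  rw [negSubstD, sum_support_affineBracket A B (F := fun N c => opTN D N (C c))
    (by simp [opTN_apply_zero])]
  simp only [opTN_zero, opTN_single, opTD_eq_neg_opSD, opSD_C, affineBracket, map_sub, map_mul,
    map_sum, map_ofNat, Finset.sum_neg_distrib, Finset.sum_add_distrib, mul_comm (X _)]
  ring

end AffineBracket

section DifferentialOrder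

variable {D : ℕ}

/-- `f` involves only the derivatives `u^{(N)}` with `|N| ≤ n`. -/
def HasDiffOrderLE (n : ℕ) (f : DiffPolyD D) : Prop :=
  ∀ N, n < degree N → pderiv N f = 0

theorem HasDiffOrderLE.mono {m n : ℕ} (hmn : m ≤ n) {f : DiffPolyD D} (hf : HasDiffOrderLE m f) :
    HasDiffOrderLE n f :=
  fun N hN => hf N (hmn.trans_lt hN)

theorem HasDiffOrderLE.const_mul {n : ℕ} {f : DiffPolyD D} (hf : HasDiffOrderLE n f) (z : ℂ) :
    HasDiffOrderLE n (C z * f) :=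
  fun N hN => by rw [pderiv_C_mul, hf N hN, mul_zero]

theorem pderiv_derD (N : Fin D →₀ ℕ) (α : Fin D) (f : DiffPolyD D) :
    pderiv N (derD D α f) =
      derD D α (pderiv N f) + if single α 1 ≤ N then pderiv (N - single α 1) f else 0 := by
  classical
  have commutator : ⁅(pderiv N : Derivation ℂ (DiffPolyD D) (DiffPolyD D)), derD D α⁆ =
      if single α 1 ≤ N then pderiv (N - single α 1) else 0 := by
    refine derivation_ext fun M => ?_
    have pderiv_X_const : derD D α (pderiv N (X M)) = 0 := by
      rw [pderiv_X, Pi.single_apply]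
      split_ifs <;> simp
    rw [Derivation.commutator_apply, pderiv_X_const, sub_zero, derD, mkDerivation_X, pderiv_X,
      Pi.single_apply]
    split_ifs with hM hα hα
    · simp [← hM]
    · exact absurd (hM ▸ le_add_self) hα
    · rw [pderiv_X_of_ne fun h => hM (by rw [h, tsub_add_cancel_of_le hα])]
    · rfl
  have h := congrArg (fun δ : Derivation ℂ (DiffPolyD D) (DiffPolyD D) => δ f) commutator
  rw [Derivation.commutator_apply, sub_eq_iff_eq_add'] at h
  rw [h]
  split_ifs <;> rfl

theorem HasDiffOrderLE.derD {n : ℕ} {f : DiffPolyD D} (hf : HasDiffOrderLE n f) (α : Fin D) :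
    HasDiffOrderLE (n + 1) (derD D α f) := by
  intro N hN
  rw [pderiv_derD, hf N (by omega), map_zero, zero_add, ite_eq_right_iff]
  intro hα
  refine hf _ ?_
  have := congrArg degree (tsub_add_cancel_of_le hα)
  rw [map_add, Finsupp.degree_single] at this
  omega

theorem pderiv_aeval_X_zero (N : Fin D →₀ ℕ) (p : Polynomial ℂ) :
    pderiv N (Polynomial.aeval (X 0 : DiffPolyD D) p) =
      Polynomial.aeval (X 0) p.derivative * pderiv N (X 0) :=
  Derivation.map_aeval _ _ _

theorem derD_aeval_X_zero (α : Fin D) (p : Polynomial ℂ) :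
    derD D α (Polynomial.aeval (X 0) p) =
      Polynomial.aeval (X 0) p.derivative * X (single α 1) := by
  rw [Derivation.map_aeval, derD, mkDerivation_X, zero_add, smul_eq_mul]

theorem hasDiffOrderLE_aeval_X_zero (p : Polynomial ℂ) :
    HasDiffOrderLE 0 (Polynomial.aeval (X 0 : DiffPolyD D) p) := by
  intro N hN
  have : 0 ≠ N := by rintro rfl; simp at hN
  rw [pderiv_aeval_X_zero, pderiv_X_of_ne this, mul_zero]

theorem sum_aeval_mul_X_single_eq_zero_iff (p : Fin D → Polynomial ℂ) :
    ∑ α, Polynomial.aeval (X 0) (p α) * (X (single α 1) : DiffPolyD D) = 0 ↔ ∀ α, p α = 0 := by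
  classical
  refine ⟨fun h β => ?_, fun h => by simp [h]⟩
  have pderiv_sum : pderiv (single β 1)
      (∑ α, Polynomial.aeval (X 0) (p α) * (X (single α 1) : DiffPolyD D)) =
        Polynomial.aeval (X 0) (p β) := by
    simp [pderiv_X, Pi.single_apply, Finsupp.single_left_inj]
  rw [h, map_zero] at pderiv_sum
  exact transcendental_iff.mp (transcendental_X ℂ _) _ pderiv_sum.symm

end DifferentialOrder

section MasterFormula

variable {D : ℕ} {A : Fin D → DiffPolyD D} {B f : DiffPolyD D}

theorem mfD_X_zero_of_hasDiffOrderLE_one (hf : HasDiffOrderLE 1 f) :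
    mfD D (affineBracket A B) (X 0) f =
      C (pderiv 0 f) * affineBracket A B +
        ∑ α, C (pderiv (single α 1) f) * opSD D α (affineBracket A B) := by
  rw [mfD, finsum_eq_single _ 0]
  · rw [finsum_eq_zero_add_sum_single fun N hN => by rw [hf N hN, map_zero, zero_mul]]
    simp only [pderiv_X_self, map_one, opTN_zero, hOp_affineBracket_one, opSN_zero, opSN_single]
  · intro M hM
    simp only [pderiv_X_of_ne hM.symm, map_zero, opTN_apply_zero, hOp_zero, opSN_apply_zero,
      mul_zero, finsum_zero]

theorem mfD_of_hasDiffOrderLE_one_X_zero (hf : HasDiffOrderLE 1 f) :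
    mfD D (affineBracket A B) f (X 0) = hOp D (affineBracket A B)
      (C (pderiv 0 f) - ∑ α, opSD D α (C (pderiv (single α 1) f))) := by
  have inner_sum (r : LPolyD D) :
      ∑ᶠ N, C (pderiv N (X 0 : DiffPolyD D)) * opSN D N r = r := by
    rw [finsum_eq_single _ 0]
    · rw [pderiv_X_self, map_one, one_mul, opSN_zero]
    · intro N hN
      rw [pderiv_X_of_ne hN.symm, map_zero, zero_mul]
  let hOpHom := AddMonoidHom.mk' (hOp D (affineBracket A B)) (hOp_affineBracket_add A B)
  simp only [mfD, inner_sum]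
  rw [finsum_eq_zero_add_sum_single fun N hN => by
    rw [hf N hN, map_zero, opTN_apply_zero, hOp_zero]]
  simp only [opTN_zero, opTN_single, opTD_eq_neg_opSD, sub_eq_add_neg, ← Finset.sum_neg_distrib]
  exact ((map_add hOpHom _ _).trans (congrArg _ (map_sum hOpHom _ _))).symm

theorem mfD_X_zero_of_hasDiffOrderLE_zero (hf : HasDiffOrderLE 0 f) :
    mfD D (affineBracket A B) (X 0) f = C (pderiv 0 f) * affineBracket A B := by
  have pderiv_single (α : Fin D) : pderiv (single α 1) f = 0 := hf _ (by simp)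
  simp only [mfD_X_zero_of_hasDiffOrderLE_one (hf.mono zero_le_one), pderiv_single, map_zero,
    zero_mul, Finset.sum_const_zero, add_zero]

theorem mfD_of_hasDiffOrderLE_zero_X_zero (hf : HasDiffOrderLE 0 f) :
    mfD D (affineBracket A B) f (X 0) = hOp D (affineBracket A B) (C (pderiv 0 f)) := by
  have pderiv_single (α : Fin D) : pderiv (single α 1) f = 0 := hf _ (by simp)
  simp only [mfD_of_hasDiffOrderLE_one_X_zero (hf.mono zero_le_one), pderiv_single, map_zero,
    opSD_zero, Finset.sum_const_zero, sub_zero]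

theorem mfD_X_zero_const_mul (hf : HasDiffOrderLE 0 f) (z : ℂ) :
    mfD D (affineBracket A B) (X 0) (C z * f) =
      C (C z) * mfD D (affineBracket A B) (X 0) f := by
  rw [mfD_X_zero_of_hasDiffOrderLE_zero (hf.const_mul z),
    mfD_X_zero_of_hasDiffOrderLE_zero hf, pderiv_C_mul, map_mul, mul_assoc]

theorem mfD_const_mul_X_zero (hf : HasDiffOrderLE 0 f) (z : ℂ) :
    mfD D (affineBracket A B) (C z * f) (X 0) =
      C (C z) * mfD D (affineBracket A B) f (X 0) := by
  rw [mfD_of_hasDiffOrderLE_zero_X_zero (hf.const_mul z),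
    mfD_of_hasDiffOrderLE_zero_X_zero hf, pderiv_C_mul, map_mul, hOp_affineBracket_const_mul]

end MasterFormula

section Direction

variable {D : ℕ}

/-- The derivation `∂_c = Σ_α c_α ∂_α` along the constant vector `c`. -/
noncomputable def dirDeriv (c : Fin D → ℂ) : Derivation ℂ (DiffPolyD D) (DiffPolyD D) :=
  ∑ α, c α • derD D α

/-- The variable `λ_c = Σ_α c_α λ_α` dual to `∂_c`. -/
noncomputable def dirVar (c : Fin D → ℂ) : LPolyD D :=
  ∑ α, C (C (c α)) * X α

variable (c : Fin D → ℂ)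

theorem dirDeriv_apply (f : DiffPolyD D) : dirDeriv c f = ∑ α, C (c α) * derD D α f := by
  rw [dirDeriv, ← Derivation.coeFnAddMonoidHom_apply, map_sum, Finset.sum_apply]
  simp only [Derivation.coeFnAddMonoidHom_apply, Derivation.smul_apply, smul_eq_C_mul]

theorem coeffwiseDerivation_dirDeriv (r : LPolyD D) :
    coeffwiseDerivation (dirDeriv c) r =
      ∑ α, C (C (c α)) * coeffwiseDerivation (derD D α) r := by
  ext1 N
  simp only [coeff_coeffwiseDerivation, dirDeriv_apply, coeff_sum, coeff_C_mul]

theorem sum_C_mul_opSD (r : LPolyD D) :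
    ∑ α, C (C (c α)) * opSD D α r = dirVar c * r + coeffwiseDerivation (dirDeriv c) r := by
  simp only [opSD, dmapD_eq_coeffwiseDerivation, coeffwiseDerivation_dirDeriv, dirVar, mul_add,
    Finset.sum_add_distrib, Finset.sum_mul, mul_assoc]

theorem coeffwiseDerivation_dirVar (δ : Derivation ℂ (DiffPolyD D) (DiffPolyD D)) :
    coeffwiseDerivation δ (dirVar c) = 0 := by
  simp [dirVar, coeffwiseDerivation_C, coeffwiseDerivation_X]

theorem opSD_dirVar_mul (α : Fin D) (r : LPolyD D) :
    opSD D α (dirVar c * r) = dirVar c * opSD D α r := by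
  rw [opSD, opSD, dmapD_eq_coeffwiseDerivation, dmapD_eq_coeffwiseDerivation, Derivation.leibniz,
    coeffwiseDerivation_dirVar, smul_zero, add_zero, smul_eq_mul]
  ring

theorem hOp_affineBracket_dirVar_mul (A : Fin D → DiffPolyD D) (B : DiffPolyD D) (r : LPolyD D) :
    hOp D (affineBracket A B) (dirVar c * r) = dirVar c * hOp D (affineBracket A B) r := by
  simp only [hOp_affineBracket, opSD_dirVar_mul, mul_add, Finset.mul_sum,
    mul_left_comm (dirVar c)]

variable {c} {n : ℕ} {f : DiffPolyD D} {A : Fin D → DiffPolyD D} {B : DiffPolyD D}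

theorem pderiv_zero_dirDeriv : pderiv 0 (dirDeriv c f) = dirDeriv c (pderiv 0 f) := by
  simp [dirDeriv_apply, pderiv_derD]

theorem pderiv_single_dirDeriv (hf : HasDiffOrderLE 0 f) (β : Fin D) :
    pderiv (single β 1) (dirDeriv c f) = C (c β) * pderiv 0 f := by
  have hβ : pderiv (single β 1) f = 0 := hf _ (by simp)
  rw [dirDeriv_apply, map_sum, Finset.sum_eq_single β]
  · simp [pderiv_derD, hβ]
  · intro α _ hα
    simp [pderiv_derD, hβ, hα.symm]
  · simp

theorem HasDiffOrderLE.dirDeriv (hf : HasDiffOrderLE n f) :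
    HasDiffOrderLE (n + 1) (dirDeriv c f) := by
  intro N hN
  rw [dirDeriv_apply, map_sum]
  exact Finset.sum_eq_zero fun α _ => (hf.derD α).const_mul (c α) N hN

theorem mfD_X_zero_dirDeriv (hf : HasDiffOrderLE 0 f) :
    mfD D (affineBracket A B) (X 0) (dirDeriv c f) =
      dirVar c * mfD D (affineBracket A B) (X 0) f +
        coeffwiseDerivation (dirDeriv c) (mfD D (affineBracket A B) (X 0) f) := by
  have sum_eq : ∑ α, C (pderiv (single α 1) (dirDeriv c f)) * opSD D α (affineBracket A B) =
      C (pderiv 0 f) * ∑ α, C (C (c α)) * opSD D α (affineBracket A B) := by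
    simp only [pderiv_single_dirDeriv hf, map_mul, Finset.mul_sum, mul_left_comm, mul_assoc]
  rw [mfD_X_zero_of_hasDiffOrderLE_one hf.dirDeriv, sum_eq, sum_C_mul_opSD, pderiv_zero_dirDeriv,
    mfD_X_zero_of_hasDiffOrderLE_zero hf, Derivation.leibniz, coeffwiseDerivation_C]
  simp only [smul_eq_mul]
  ring

theorem mfD_dirDeriv_X_zero (hf : HasDiffOrderLE 0 f) :
    mfD D (affineBracket A B) (dirDeriv c f) (X 0) =
      -(dirVar c * mfD D (affineBracket A B) f (X 0)) := by
  have adjoint_symbol :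
      C (dirDeriv c (pderiv 0 f)) - ∑ α, opSD D α (C (C (c α) * pderiv 0 f)) =
        dirVar c * (C (C (-1)) * C (pderiv 0 f)) := by
    simp only [map_mul, opSD_const_mul, sum_C_mul_opSD, coeffwiseDerivation_C, map_neg, map_one]
    ring
  rw [mfD_of_hasDiffOrderLE_one_X_zero hf.dirDeriv, pderiv_zero_dirDeriv]
  simp only [pderiv_single_dirDeriv hf, adjoint_symbol]
  rw [hOp_affineBracket_dirVar_mul, hOp_affineBracket_const_mul,
    mfD_of_hasDiffOrderLE_zero_X_zero hf]
  simp only [map_neg, map_one]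
  ring

end Direction

section MokhovBracket

variable {D : ℕ}

/-- Mokhov's bracket `Σ_α c_α (2G λ_α + ∂_α G)`, for `G = g(u)`. -/
noncomputable def mokhovBracket (c : Fin D → ℂ) (G : DiffPolyD D) : LPolyD D :=
  affineBracket (fun α => C (c α) * (2 * G)) (dirDeriv c G)

variable (c : Fin D → ℂ) {G : DiffPolyD D}

theorem mokhovBracket_eq :
    mokhovBracket c G = C (dirDeriv c G) + 2 * C G * dirVar c := by
  simp only [mokhovBracket, affineBracket, dirVar, Finset.mul_sum, map_mul, map_ofNat]
  exact congrArg _ (Finset.sum_congr rfl fun α _ => by ring)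

theorem hOp_mokhovBracket (r : LPolyD D) :
    hOp D (mokhovBracket c G) r =
      C (dirDeriv c G) * r +
        2 * C G * (dirVar c * r + coeffwiseDerivation (dirDeriv c) r) := by
  rw [mokhovBracket, hOp_affineBracket, ← sum_C_mul_opSD, Finset.mul_sum]
  simp only [map_mul, map_ofNat]
  exact congrArg _ (Finset.sum_congr rfl fun α _ => by ring)

theorem mfD_mokhovBracket_X_zero_left (hG : HasDiffOrderLE 0 G) :
    mfD D (mokhovBracket c G) (X 0) G =
      C (pderiv 0 G) * (C (dirDeriv c G) + 2 * C G * dirVar c) := by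
  rw [mokhovBracket, mfD_X_zero_of_hasDiffOrderLE_zero hG, ← mokhovBracket, mokhovBracket_eq]

theorem mfD_mokhovBracket_X_zero_right (hG : HasDiffOrderLE 0 G) :
    mfD D (mokhovBracket c G) G (X 0) =
      C (dirDeriv c G) * C (pderiv 0 G) +
        2 * C G * (dirVar c * C (pderiv 0 G) + C (dirDeriv c (pderiv 0 G))) := by
  rw [mokhovBracket, mfD_of_hasDiffOrderLE_zero_X_zero hG, ← mokhovBracket, hOp_mokhovBracket,
    coeffwiseDerivation_C]

end MokhovBracket

section Jacobi

variable {D : ℕ}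

/-- The substitution `λ ↦ λ + μ`, from `V[λ]` to `V[λ][μ]`. -/
noncomputable def substAdd : LPolyD D →+* MvPolynomial (Fin D) (LPolyD D) :=
  eval₂Hom (C.comp C) fun α => C (X α) + X α

theorem jacD_affineBracket (A : Fin D → DiffPolyD D) (B : DiffPolyD D) :
    jacD D (affineBracket A B) =
      (C (mfD D (affineBracket A B) (X 0) B) +
          ∑ α, X α * C (mfD D (affineBracket A B) (X 0) (A α))) -
        (map C (mfD D (affineBracket A B) (X 0) B) +
          ∑ α, C (X α) * map C (mfD D (affineBracket A B) (X 0) (A α))) -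
        (substAdd (mfD D (affineBracket A B) B (X 0)) +
          ∑ α, C (X α) * substAdd (mfD D (affineBracket A B) (A α) (X 0))) := by
  have mfD_zero_right : mfD D (affineBracket A B) (X 0) 0 = 0 := by simp [mfD]
  have mfD_zero_left : mfD D (affineBracket A B) 0 (X 0) = 0 := by
    simp [mfD, opTN_apply_zero, hOp_zero, opSN_apply_zero]
  have sum_monomial_map_C (N : Fin D →₀ ℕ) (p : LPolyD D) :
      ∑ K ∈ p.support, monomial K (monomial N (coeff K p)) = C (monomial N 1) * map C p := by
    conv_rhs => rw [p.as_sum]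
    simp only [map_sum, map_monomial, Finset.mul_sum, C_mul_monomial, mul_comm (monomial N _),
      mul_one]
  have sum_monomial_substAdd (N : Fin D →₀ ℕ) (p : LPolyD D) :
      ∑ K ∈ p.support, C (monomial N (coeff K p)) * ∏ α, (C (X α : LPolyD D) + X α) ^ K α =
        C (monomial N 1) * substAdd p := by
    simp only [substAdd, coe_eval₂Hom, eval₂_eq', Finset.mul_sum, RingHom.comp_apply, ← mul_assoc,
      ← C_mul, mul_comm (monomial N _), C_mul_monomial, mul_one]
  simp only [jacD, sum_monomial_map_C, sum_monomial_substAdd]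
  let E := affineBracket A B
  rw [sum_support_affineBracket A B (F := fun N f => monomial N (mfD D E (X 0) f))
      (by simp [E, mfD_zero_right]),
    sum_support_affineBracket A B (F := fun N f => C (monomial N 1) * map C (mfD D E (X 0) f))
      (by simp [E, mfD_zero_right]),
    sum_support_affineBracket A B (F := fun N f => C (monomial N 1) * substAdd (mfD D E f (X 0)))
      (by simp [E, mfD_zero_left])]
  simp [E, ← C_mul_X_eq_monomial, mul_comm]

theorem substAdd_C (f : DiffPolyD D) : substAdd (C f) = C (C f) := by
  simp [substAdd]

theorem substAdd_dirVar (c : Fin D → ℂ) :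
    substAdd (dirVar c) = C (dirVar c) + map C (dirVar c) := by
  simp [substAdd, dirVar, mul_add, Finset.sum_add_distrib]

theorem sum_map_X_mul_map_const_mul {S : Type*} [CommSemiring S] {φ ψ : LPolyD D →+* S}
    (hφ : ∀ f, φ (C f) = ψ (C f)) (c : Fin D → ℂ) (q : LPolyD D) :
    ∑ α, φ (X α) * ψ (C (C (c α)) * q) = φ (dirVar c) * ψ q := by
  simp only [dirVar, map_sum, map_mul, hφ, Finset.sum_mul]
  exact Finset.sum_congr rfl fun α _ => by ring

theorem jacD_mokhovBracket_eq (c : Fin D → ℂ) {G : DiffPolyD D} (hG : HasDiffOrderLE 0 G) :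
    jacD D (mokhovBracket c G) =
      (C (mfD D (mokhovBracket c G) (X 0) (dirDeriv c G)) +
          2 * map C (dirVar c) * C (mfD D (mokhovBracket c G) (X 0) G)) -
        (map C (mfD D (mokhovBracket c G) (X 0) (dirDeriv c G)) +
          2 * C (dirVar c) * map C (mfD D (mokhovBracket c G) (X 0) G)) -
        (C (dirVar c) - map C (dirVar c)) * substAdd (mfD D (mokhovBracket c G) G (X 0)) := by
  have h2G : HasDiffOrderLE 0 (2 * G) := hG.const_mul 2
  have two_mul_right : mfD D (mokhovBracket c G) (X 0) (2 * G) =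
      2 * mfD D (mokhovBracket c G) (X 0) G := mfD_X_zero_const_mul hG 2
  have two_mul_left : mfD D (mokhovBracket c G) (2 * G) (X 0) =
      2 * mfD D (mokhovBracket c G) G (X 0) := mfD_const_mul_X_zero hG 2
  have map_X (α : Fin D) : (X α : MvPolynomial (Fin D) (LPolyD D)) = map C (X α) := by simp
  rw [mokhovBracket, jacD_affineBracket, mfD_dirDeriv_X_zero hG]
  simp only [mfD_X_zero_const_mul h2G, mfD_const_mul_X_zero h2G]
  rw [← mokhovBracket]
  simp only [two_mul_right, two_mul_left, map_X]
  rw [sum_map_X_mul_map_const_mul (map_C C),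
    sum_map_X_mul_map_const_mul fun f => (map_C C f).symm,
    sum_map_X_mul_map_const_mul fun f => (substAdd_C f).symm]
  simp only [map_mul, map_neg, substAdd_dirVar, map_ofNat]
  ring

theorem jacD_mokhovBracket (c : Fin D → ℂ) {G : DiffPolyD D} (hG : HasDiffOrderLE 0 G) :
    jacD D (mokhovBracket c G) = 0 := by
  have bracket_dirDeriv : mfD D (mokhovBracket c G) (X 0) (dirDeriv c G) =
      dirVar c * mfD D (mokhovBracket c G) (X 0) G +
        coeffwiseDerivation (dirDeriv c) (mfD D (mokhovBracket c G) (X 0) G) :=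
    mfD_X_zero_dirDeriv hG
  rw [jacD_mokhovBracket_eq c hG, bracket_dirDeriv, mfD_mokhovBracket_X_zero_left c hG,
    mfD_mokhovBracket_X_zero_right c hG]
  simp only [two_mul, Derivation.leibniz, smul_eq_mul, coeffwiseDerivation_C,
    coeffwiseDerivation_dirVar, map_add, map_mul, map_zero, substAdd_C, substAdd_dirVar,
    MvPolynomial.map_C]
  ring

end Jacobi

section Hydrodynamic

variable {D : ℕ} (a b : Fin D → Polynomial ℂ)

/-- The scalar bracket of hydrodynamic type `Σ_α (a_α(u) λ_α + b_α(u) ∂_α u)`. -/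
noncomputable def hydrodynamicBracket : LPolyD D :=
  affineBracket (fun α => Polynomial.aeval (X 0) (a α))
    (∑ α, Polynomial.aeval (X 0) (b α) * X (single α 1))

theorem hydrodynamicBracket_add_negSubstD_eq_zero_iff :
    hydrodynamicBracket a b + negSubstD D (hydrodynamicBracket a b) = 0 ↔
      ∀ α, 2 * b α = (a α).derivative := by
  have defect_eq :
      2 * ∑ α, Polynomial.aeval (X 0) (b α) * (X (single α 1) : DiffPolyD D) -
          ∑ α, derD D α (Polynomial.aeval (X 0) (a α)) =
        ∑ α, Polynomial.aeval (X 0) (2 * b α - (a α).derivative) * X (single α 1) := by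
    simp only [derD_aeval_X_zero, Finset.mul_sum, ← Finset.sum_sub_distrib, map_sub, map_mul,
      map_ofNat, sub_mul, mul_assoc]
  rw [hydrodynamicBracket, affineBracket_add_negSubstD, map_eq_zero_iff _ (C_injective _ _),
    defect_eq, sum_aeval_mul_X_single_eq_zero_iff]
  simp only [sub_eq_zero]

variable {a b}

theorem hydrodynamicBracket_eq_mokhovBracket {c : Fin D → ℂ} {g : Polynomial ℂ}
    (skew : ∀ α, 2 * b α = (a α).derivative) (hg : ∀ α, a α = Polynomial.C (c α) * g) :
    hydrodynamicBracket a b =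
      mokhovBracket c (Polynomial.aeval (X 0) (Polynomial.C 2⁻¹ * g)) := by
  have two_mul_half : 2 * (Polynomial.C (2⁻¹ : ℂ) * g) = g := by
    rw [← mul_assoc, ← Polynomial.C_ofNat, ← Polynomial.C_mul, mul_inv_cancel₀ two_ne_zero,
      Polynomial.C_1, one_mul]
  have ha (α : Fin D) : a α = Polynomial.C (c α) * (2 * (Polynomial.C 2⁻¹ * g)) := by
    rw [hg, two_mul_half]
  have hb (α : Fin D) : b α = Polynomial.C (c α) * (Polynomial.C 2⁻¹ * g).derivative := by
    refine mul_left_cancel₀ (two_ne_zero (α := Polynomial ℂ)) ?_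
    rw [skew, ha, Polynomial.derivative_C_mul, two_mul, map_add]
    ring
  simp only [hydrodynamicBracket, mokhovBracket, dirDeriv_apply, derD_aeval_X_zero, ha, hb]
  simp only [map_mul, map_ofNat, Polynomial.aeval_C, algebraMap_eq, mul_assoc]

end Hydrodynamic

/-- (Mokhov, scalar case.)  The `D`-dimensional scalar
`λ`-bracket of hydrodynamic type `{u_λ u} = Σ_α (a_α λ_α + b_α ∂_α u)` (with
`a_α`, `b_α` functions of `u` only) is skew-symmetric iff `2 b_α = a_α'` for
all `α`; moreover, assuming skew-symmetry, if additionally `a_α = c_α g` for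
constants `c_α` and a single function `g(u)`, then the Jacobi identity holds
on the generator and the bracket defines a `D`-dimensional Poisson vertex
algebra structure. -/
theorem mokhov_scalar_multidimensional
    (D : ℕ) (a b : Fin D → Polynomial ℂ) (cc : Fin D → ℂ) (g : Polynomial ℂ)
    (H : LPolyD D)
    (hH : H = ∑ α : Fin D,
      (MvPolynomial.C (Polynomial.aeval
          (MvPolynomial.X 0 : DiffPolyD D) (b α) *
          MvPolynomial.X (Finsupp.single α 1)) +
        MvPolynomial.C (Polynomial.aeval
          (MvPolynomial.X 0 : DiffPolyD D) (a α)) * MvPolynomial.X α)) :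
    (H + negSubstD D H = 0 ↔
      ∀ α : Fin D, 2 * b α = Polynomial.derivative (a α)) ∧
    ((∀ α : Fin D, 2 * b α = Polynomial.derivative (a α)) →
      (∀ α : Fin D, a α = Polynomial.C (cc α) * g) →
      jacD D H = 0) := by
  have H_eq : H = hydrodynamicBracket a b := by
    simp only [hH, hydrodynamicBracket, affineBracket, Finset.sum_add_distrib, map_sum]
  refine ⟨H_eq ▸ hydrodynamicBracket_add_negSubstD_eq_zero_iff a b, fun skew hg => ?_⟩
  rw [H_eq, hydrodynamicBracket_eq_mokhovBracket skew hg]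
  exact jacD_mokhovBracket cc (hasDiffOrderLE_aeval_X_zero _)
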